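/- arXiv:1901.01716 — 4 statements merged into one kernel-verified Lean document; each statement's English description precedes it below -/
import Mathlib

section
/- Let (K,w) be a weighted simplicial complex over an integral domain R, and suppose K collapses onto L = K \ {σ,τ} by an elementary collapse of dimension n ≥ 1, where σ^{(n-1)} is a free face of τ^{(n)}. If w(σ) = w(τ) = a for some nonzero a ∈ R, then the elementary collapse preserves weighted homology, i.e. H_i(K,w) ≅ H_i(L,w|_L) for all i ≥ 0. -/
/-! The inclusion of `L` into `K` induces an isomorphism on weighted homology.

The rescaling `ρ ↦ w ρ • ρ` embeds the weighted chain groups (over a domain, on simplices of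
nonzero weight) into the ordinary chains and turns `∂^w` into the ordinary boundary
(`rescale_wBoundary`).  Hence `∂^w ∘ ∂^w = 0`, the inclusion of chains of `L` is a chain map, and
coefficients of `∂^w` can be read off from the ordinary boundary.

Since `τ` is the only coface of `σ` and the two weights agree, the coefficient of `σ` in `∂^w x`
is `±1` times the coefficient of `τ` in `x` (`exists_coeff_free`).  So in the dimension of `τ`,
a chain whose boundary avoids `σ` avoids `τ` and lies in `L`; in the dimension of `σ`, subtracting
a multiple of `∂^w τ` removes `σ` from any chain.  In all other dimensions the chain groups
coincide.  Thus every cycle of `K`, and every chain of `K` whose boundary lies in `L`, equals a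
chain of `L` plus a boundary, which gives surjectivity and injectivity on homology
(`nonempty_equiv_of_deform`). -/

/-! # Prelude: weighted simplicial complexes and discrete Morse theory -/

/-- A finite abstract simplicial complex on a vertex type `V`:
a finite set of nonempty finite vertex sets, closed under nonempty subsets. -/
structure FinSC (V : Type*) where
  faces : Finset (Finset V)
  not_empty_mem : ∅ ∉ faces
  down_closed : ∀ σ ∈ faces, ∀ τ ⊆ σ, τ.Nonempty → τ ∈ faces

namespace FinSC

variable {V : Type*} [LinearOrder V] {R : Type*} [CommRing R] [IsDomain R]

/-- `(K, w)` is a weighted simplicial complex: weights of faces divide weights of cofaces. -/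
def IsWeight (K : FinSC V) (w : Finset V → R) : Prop :=
  ∀ σ ∈ K.faces, ∀ τ ∈ K.faces, σ ⊆ τ → w σ ∣ w τ

open scoped Classical in
/-- The quotient `a / b` in an integral domain, defined (via choice) when `b ∣ a`, else `0`. -/
noncomputable def divR {R : Type*} [CommRing R] (a b : R) : R :=
  if h : b ∣ a then h.choose else 0

/-- `dFace σ i` deletes the `i`-th vertex (in the linear order) from the simplex `σ`. -/
def dFace (σ : Finset V) (i : ℕ) : Finset V :=
  match (σ.sort (· ≤ ·))[i]? with
  | some v => σ.erase v
  | none => σ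

/-- The basis of the weighted chain group in degree `n`:
`n`-simplices (i.e. of cardinality `n+1`) of `K` with nonzero weight. -/
abbrev ChainIdx (K : FinSC V) (w : Finset V → R) (n : ℕ) :=
  {σ : Finset V // σ ∈ K.faces ∧ σ.card = n + 1 ∧ w σ ≠ 0}

/-- The weighted chain group `C_n(K, w)`: the free `R`-module on the `n`-simplices
of `K` with nonzero weight. -/
abbrev WChain (K : FinSC V) (w : Finset V → R) (n : ℕ) :=
  ChainIdx K w n →₀ R

open scoped Classical in
/-- The weighted boundary `∂^w σ = Σ_i (-1)^i (w σ / w (d_i σ)) d_i σ` of a single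
`(n+1)`-simplex `σ`, as an element of `C_n(K, w)`. -/
noncomputable def bdElem (K : FinSC V) (w : Finset V → R) (n : ℕ) (σ : Finset V) :
    WChain K w n :=
  ∑ i ∈ Finset.range (n + 2),
    if h : dFace σ i ∈ K.faces ∧ (dFace σ i).card = n + 1 ∧ w (dFace σ i) ≠ 0 then
      Finsupp.single (⟨dFace σ i, h⟩ : ChainIdx K w n)
        ((-1 : R) ^ i * divR (w σ) (w (dFace σ i)))
    else 0

/-- The weighted boundary map `∂^w_{n+1} : C_{n+1}(K,w) → C_n(K,w)`. -/
noncomputable def wBoundary (K : FinSC V) (w : Finset V → R) (n : ℕ) :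
    WChain K w (n + 1) →ₗ[R] WChain K w n :=
  Finsupp.linearCombination R (fun σ : ChainIdx K w (n + 1) => bdElem K w n σ.1)

/-- The submodule of weighted `n`-cycles (`ker ∂^w_n`; everything in degree `0`). -/
noncomputable def cycles (K : FinSC V) (w : Finset V → R) :
    (n : ℕ) → Submodule R (WChain K w n)
  | 0 => ⊤
  | n + 1 => LinearMap.ker (wBoundary K w n)

/-- The submodule of weighted `n`-boundaries (`im ∂^w_{n+1}`). -/
noncomputable def bdries (K : FinSC V) (w : Finset V → R) (n : ℕ) :
    Submodule R (WChain K w n) :=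
  LinearMap.range (wBoundary K w n)

/-- The `n`-th weighted homology `H_n(K,w) = ker ∂^w_n / im ∂^w_{n+1}`, realized as the
image of the cycles in `C_n(K,w) ⧸ im ∂^w_{n+1}` (since `im ∂^w_{n+1} ⊆ ker ∂^w_n`,
this is exactly `ker ∂^w_n / im ∂^w_{n+1}`). -/
noncomputable def wHomologyS (K : FinSC V) (w : Finset V → R) (n : ℕ) :
    Submodule R (WChain K w n ⧸ bdries K w n) :=
  Submodule.map (bdries K w n).mkQ (cycles K w n)

/-- The `n`-th weighted homology as a type (an `R`-module). -/
abbrev wHomology (K : FinSC V) (w : Finset V → R) (n : ℕ) :=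
  ↥(wHomologyS K w n)

/-- The homology class of a weighted cycle. -/
noncomputable def classOf (K : FinSC V) (w : Finset V → R) (n : ℕ)
    (z : WChain K w n) (hz : z ∈ cycles K w n) : wHomology K w n :=
  ⟨(bdries K w n).mkQ z, Submodule.mem_map_of_mem hz⟩

/-- `σ` is a free face of `τ` in `K`: `σ` is a proper face of `τ` and of no other simplex. -/
def IsFreeFace (K : FinSC V) (σ τ : Finset V) : Prop :=
  σ ∈ K.faces ∧ τ ∈ K.faces ∧ σ ⊂ τ ∧ ∀ ρ ∈ K.faces, σ ⊂ ρ → ρ = τ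

/-- An elementary collapse: removal of a free face pair. -/
def ElemCollapse (K L : FinSC V) : Prop :=
  ∃ σ τ : Finset V, IsFreeFace K σ τ ∧ L.faces = K.faces \ {σ, τ}

/-- `K ↘ L`: `K` collapses onto `L` by a finite sequence of elementary collapses. -/
def Collapses (K L : FinSC V) : Prop :=
  Relation.ReflTransGen ElemCollapse K L

/-- `σ` is a maximal face of `K`: it is a proper face of no simplex of `K`. -/
def IsMaximalFace (K : FinSC V) (σ : Finset V) : Prop :=
  σ ∈ K.faces ∧ ∀ τ ∈ K.faces, ¬ σ ⊂ τ

/-- `f : K → ℝ` is a discrete Morse function: each simplex has at most one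
codimension-one coface with no bigger `f`-value, and at most one codimension-one
face with no smaller `f`-value. -/
def IsDiscreteMorse (K : FinSC V) (f : Finset V → ℝ) : Prop :=
  ∀ α ∈ K.faces,
    {β : Finset V | β ∈ K.faces ∧ α ⊂ β ∧ β.card = α.card + 1 ∧ f β ≤ f α}.Subsingleton ∧
    {γ : Finset V | γ ∈ K.faces ∧ γ ⊂ α ∧ γ.card + 1 = α.card ∧ f α ≤ f γ}.Subsingleton

/-- `α` is a critical simplex of the discrete Morse function `f`. -/
def IsCritical (K : FinSC V) (f : Finset V → ℝ) (α : Finset V) : Prop :=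
  (∀ β ∈ K.faces, α ⊂ β → β.card = α.card + 1 → ¬ f β ≤ f α) ∧
  (∀ γ ∈ K.faces, γ ⊂ α → γ.card + 1 = α.card → ¬ f α ≤ f γ)

/-- `α` is `w`-simple: `w α ≠ 0`, and any codimension-one face `γ < α` with
`f γ ≥ f α` satisfies `w γ = w α`. -/
def IsWSimple (K : FinSC V) (w : Finset V → R) (f : Finset V → ℝ) (α : Finset V) : Prop :=
  w α ≠ 0 ∧ ∀ γ ∈ K.faces, γ ⊂ α → γ.card + 1 = α.card → f α ≤ f γ → w γ = w α

/-- The level subcomplex `K(c)`: all simplices with `f`-value at most `c`,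
together with all of their faces. -/
noncomputable def levelSub (K : FinSC V) (f : Finset V → ℝ) (c : ℝ) : FinSC V where
  faces := K.faces.filter (fun α => ∃ β ∈ K.faces, α ⊆ β ∧ f β ≤ c)
  not_empty_mem := by simp [Finset.mem_filter, K.not_empty_mem]
  down_closed := by
    intro σ hσ τ hτsub hτne
    simp only [Finset.mem_filter] at hσ ⊢
    obtain ⟨hσK, β, hβ, hσβ, hfβ⟩ := hσ
    exact ⟨K.down_closed σ hσK τ hτsub hτne, β, hβ, hτsub.trans hσβ, hfβ⟩

/-- The chains of `C_n(K,w)` supported on simplices of a subcomplex `L`. -/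
noncomputable def chainsIn (K L : FinSC V) (w : Finset V → R) (n : ℕ) :
    Submodule R (WChain K w n) where
  carrier := {x | ∀ σ : ChainIdx K w n, x σ ≠ 0 → σ.1 ∈ L.faces}
  add_mem' := by
    intro a b ha hb σ h
    by_cases h1 : a σ = 0
    · exact hb σ (by simpa [h1] using h)
    · exact ha σ h1
  zero_mem' := by intro σ h; simp at h
  smul_mem' := by
    intro r x hx σ h
    refine hx σ fun h0 => ?_
    simp [Finsupp.smul_apply, h0] at h

/-- The image of the map `i_* : H_n(L,w) → H_n(K,w)` induced by the inclusion of
chain complexes: the classes in `H_n(K,w)` of cycles of `K` supported on simplices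
of the subcomplex `L`. -/
noncomputable def imInduced (K L : FinSC V) (w : Finset V → R) (n : ℕ) :
    Submodule R (wHomology K w n) :=
  Submodule.comap (wHomologyS K w n).subtype
    (Submodule.map (bdries K w n).mkQ (cycles K w n ⊓ chainsIn K L w n))

end FinSC

section OrderComplex

variable {A : Type*} [LinearOrder A]

/-- The proper (nonempty, not all of `S`) substrings of a sequence `S`,
i.e. its proper nonempty infixes. -/
def properSubstr (S : List A) : Finset (List A) :=
  ((S.tails.flatMap List.inits).toFinset).filter (fun T => T ≠ [] ∧ T ≠ S)

/-- The order complex `Δ(P_S)` of the poset of proper substrings of `S` under the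
substring (infix) partial order: faces are the nonempty chains. -/
def orderComplex (S : List A) : FinSC (List A) where
  faces := (properSubstr S).powerset.filter
    (fun σ => σ.Nonempty ∧ ∀ T₁ ∈ σ, ∀ T₂ ∈ σ, T₁ <:+: T₂ ∨ T₂ <:+: T₁)
  not_empty_mem := by simp
  down_closed := by
    intro σ hσ τ hτsub hτne
    simp only [Finset.mem_filter, Finset.mem_powerset] at hσ ⊢
    exact ⟨hτsub.trans hσ.1, hτne,
      fun T₁ h1 T₂ h2 => hσ.2.2 T₁ (hτsub h1) T₂ (hτsub h2)⟩

end OrderComplex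

namespace FinSC

variable {V : Type*} [LinearOrder V] {R : Type*} [CommRing R] [IsDomain R]

/-! ### The unweighted augmented boundary -/

/-- The sign `(-1) ^ #{u ∈ ρ | u < v}` with which the face `ρ \ {v}` occurs in the boundary
of `ρ`. -/
def vSign (R : Type*) [CommRing R] (ρ : Finset V) (v : V) : R :=
  (-1) ^ (ρ.filter (· < v)).card

/-- The ordinary (unweighted, augmented) simplicial boundary on the free module on all finite
vertex sets. -/
noncomputable def plainBd (V : Type*) [LinearOrder V] (R : Type*) [CommRing R] :
    (Finset V →₀ R) →ₗ[R] (Finset V →₀ R) :=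
  Finsupp.linearCombination R
    (fun ρ : Finset V => ∑ v ∈ ρ, Finsupp.single (ρ.erase v) (vSign R ρ v))

lemma plainBd_single (ρ : Finset V) (r : R) :
    plainBd V R (Finsupp.single ρ r) =
      r • ∑ v ∈ ρ, Finsupp.single (ρ.erase v) (vSign R ρ v) := by
  simp [plainBd]

lemma vSign_swap_of_lt {ρ : Finset V} {u v : V} (hu : u ∈ ρ) (huv : u < v) :
    vSign R ρ v * vSign R (ρ.erase v) u + vSign R ρ u * vSign R (ρ.erase u) v = 0 := by
  have h1 : (ρ.erase v).filter (· < u) = ρ.filter (· < u) := by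
    ext x
    simp only [Finset.mem_filter, Finset.mem_erase]
    constructor
    · rintro ⟨⟨_, h⟩, h'⟩
      exact ⟨h, h'⟩
    · rintro ⟨h, h'⟩
      exact ⟨⟨(h'.trans huv).ne, h⟩, h'⟩
  have h2 : (ρ.erase u).filter (· < v) = (ρ.filter (· < v)).erase u := by
    rw [Finset.filter_erase]
  have h3 : ((ρ.filter (· < v)).erase u).card + 1 = (ρ.filter (· < v)).card :=
    Finset.card_erase_add_one (by simp [hu, huv])
  simp only [vSign, h1, h2, ← h3, pow_succ]
  ring

/-- Deleting two vertices in either order gives opposite signs. -/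
lemma vSign_swap {ρ : Finset V} {u v : V} (hu : u ∈ ρ) (hv : v ∈ ρ) (huv : u ≠ v) :
    vSign R ρ v * vSign R (ρ.erase v) u + vSign R ρ u * vSign R (ρ.erase u) v = 0 := by
  rcases lt_or_gt_of_ne huv with h | h
  · exact vSign_swap_of_lt hu h
  · rw [add_comm]
    exact vSign_swap_of_lt hv h

lemma plainBd_plainBd (x : Finset V →₀ R) : plainBd V R (plainBd V R x) = 0 := by
  suffices h : plainBd V R ∘ₗ plainBd V R = 0 from LinearMap.congr_fun h x
  ext1 ρ
  ext1
  simp only [LinearMap.comp_apply, Finsupp.lsingle_apply, plainBd_single, one_smul, map_sum,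
    LinearMap.zero_apply, Finset.smul_sum, Finsupp.smul_single, smul_eq_mul]
  rw [Finset.sum_sigma']
  refine Finset.sum_involution (fun p _ => ⟨p.2, p.1⟩) ?_ ?_ ?_ ?_
  · rintro ⟨v, u⟩ h
    simp only [Finset.mem_sigma, Finset.mem_erase] at h
    rw [Finset.erase_right_comm, ← Finsupp.single_add,
      vSign_swap h.2.2 h.1 h.2.1, Finsupp.single_zero]
  · rintro ⟨v, u⟩ h _ heq
    simp only [Finset.mem_sigma, Finset.mem_erase] at h
    exact h.2.1 (congrArg Sigma.fst heq)
  · rintro ⟨v, u⟩ h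
    simp only [Finset.mem_sigma, Finset.mem_erase] at h ⊢
    exact ⟨h.2.2, Ne.symm h.2.1, h.1⟩
  · rintro ⟨v, u⟩ h
    rfl

/-- The indexed form of a sum over the faces of `ρ`, as used in `bdElem`, agrees with the sum
over deleted vertices. -/
lemma sum_dFace {M : Type*} [AddCommMonoid M] (ρ : Finset V) (m : ℕ) (hm : ρ.card = m)
    (f : ℕ → Finset V → M) :
    ∑ i ∈ Finset.range m, f i (dFace ρ i) =
      ∑ v ∈ ρ, f (ρ.filter (· < v)).card (ρ.erase v) := by
  have key : ∀ i : Fin m, dFace ρ i = ρ.erase (ρ.orderEmbOfFin hm i) ∧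
      (ρ.filter (· < ρ.orderEmbOfFin hm i)).card = i := by
    intro i
    constructor
    · have hi : (i : ℕ) < (ρ.sort (· ≤ ·)).length := by simp [hm]
      simp only [dFace, List.getElem?_eq_getElem hi]
      rw [Finset.orderEmbOfFin_apply]
      rfl
    · have : ρ.filter (· < ρ.orderEmbOfFin hm i) =
          (Finset.Iio i).map (ρ.orderEmbOfFin hm).toEmbedding := by
        ext x
        simp only [Finset.mem_filter, Finset.mem_map, Finset.mem_Iio]
        constructor
        · rintro ⟨hx, hlt⟩
          have : x ∈ Set.range (ρ.orderEmbOfFin hm) := by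
            rw [Finset.range_orderEmbOfFin]; exact hx
          obtain ⟨j, rfl⟩ := this
          exact ⟨j, by simpa using hlt, rfl⟩
        · rintro ⟨j, hj, rfl⟩
          exact ⟨Finset.orderEmbOfFin_mem ρ hm j, by simpa using hj⟩
      rw [this, Finset.card_map, Fin.card_Iio]
  rw [Finset.sum_range]
  refine Finset.sum_bij (fun i _ => ρ.orderEmbOfFin hm i) ?_ ?_ ?_ ?_
  · intro i _
    exact Finset.orderEmbOfFin_mem ρ hm i
  · intro i _ j _ h
    exact (ρ.orderEmbOfFin hm).injective h
  · intro v hv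
    have : v ∈ Set.range (ρ.orderEmbOfFin hm) := by
      rw [Finset.range_orderEmbOfFin]; exact hv
    obtain ⟨j, rfl⟩ := this
    exact ⟨j, Finset.mem_univ _, rfl⟩
  · intro i _
    rw [(key i).1, (key i).2]

/-! ### Comparing weighted and unweighted chains -/

/-- The map `ρ ↦ w ρ • ρ` from weighted chains to unweighted chains. -/
noncomputable def rescale (K : FinSC V) (w : Finset V → R) (n : ℕ) :
    WChain K w n →ₗ[R] (Finset V →₀ R) :=
  Finsupp.linearCombination R (fun ρ : ChainIdx K w n => Finsupp.single ρ.1 (w ρ.1))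

lemma rescale_single (K : FinSC V) (w : Finset V → R) (n : ℕ) (ρ : ChainIdx K w n) (r : R) :
    rescale K w n (Finsupp.single ρ r) = Finsupp.single ρ.1 (r * w ρ.1) := by
  simp [rescale]

lemma rescale_apply (K : FinSC V) (w : Finset V → R) (n : ℕ) (x : WChain K w n)
    (ρ : ChainIdx K w n) : rescale K w n x ρ.1 = x ρ * w ρ.1 := by
  induction x using Finsupp.induction_linear with
  | zero => simp
  | add f g hf hg => simp [hf, hg, add_mul]
  | single α r =>
    rw [rescale_single]
    by_cases h : α = ρ
    · subst h; simp
    · rw [Finsupp.single_eq_of_ne (fun h' => h (Subtype.ext h'.symm)),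
        Finsupp.single_eq_of_ne (Ne.symm h), zero_mul]

lemma rescale_injective (K : FinSC V) (w : Finset V → R) (n : ℕ) :
    Function.Injective (rescale K w n) := by
  intro x y h
  ext ρ
  have := DFunLike.congr_fun h ρ.1
  rw [rescale_apply, rescale_apply] at this
  exact mul_right_cancel₀ ρ.2.2.2 this

lemma divR_mul {a b : R} (h : b ∣ a) : divR a b * b = a := by
  rw [divR, dif_pos h, mul_comm]
  exact h.choose_spec.symm

/-- Rescaling turns the weighted boundary into the ordinary one, because
`(w ρ / w (d_i ρ)) * w (d_i ρ) = w ρ`. -/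
lemma rescale_wBoundary {K : FinSC V} {w : Finset V → R} (hw : IsWeight K w) (n : ℕ)
    (x : WChain K w (n + 1)) :
    rescale K w n (wBoundary K w n x) = plainBd V R (rescale K w (n + 1) x) := by
  classical
  induction x using Finsupp.induction_linear with
  | zero => simp
  | add f g hf hg => simp only [map_add, hf, hg]
  | single ρ r =>
    obtain ⟨ρ, hρ, hcard, hne⟩ := ρ
    rw [rescale_single, plainBd_single, wBoundary, Finsupp.linearCombination_single, map_smul,
      mul_smul]
    congr 1
    simp only [bdElem]
    rw [sum_dFace ρ (n + 2) hcard (fun i α =>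
      if h : α ∈ K.faces ∧ α.card = n + 1 ∧ w α ≠ 0 then
        Finsupp.single (⟨α, h⟩ : ChainIdx K w n) ((-1 : R) ^ i * divR (w ρ) (w α))
      else 0), map_sum, Finset.smul_sum]
    refine Finset.sum_congr rfl fun v hv => ?_
    have hc : (ρ.erase v).card = n + 1 := by
      rw [Finset.card_erase_of_mem hv, hcard]; rfl
    have hK : ρ.erase v ∈ K.faces :=
      K.down_closed ρ hρ _ (Finset.erase_subset _ _) (Finset.card_pos.1 (by omega))
    have hd : w (ρ.erase v) ∣ w ρ := hw _ hK _ hρ (Finset.erase_subset _ _)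
    have h0 : w (ρ.erase v) ≠ 0 := fun h => hne (by rw [h] at hd; exact zero_dvd_iff.1 hd)
    rw [dif_pos ⟨hK, hc, h0⟩, rescale_single, mul_assoc, divR_mul hd, Finsupp.smul_single,
      smul_eq_mul, vSign, mul_comm]

lemma wBoundary_wBoundary {K : FinSC V} {w : Finset V → R} (hw : IsWeight K w) (n : ℕ)
    (x : WChain K w (n + 2)) : wBoundary K w n (wBoundary K w (n + 1) x) = 0 := by
  apply rescale_injective
  rw [rescale_wBoundary hw, rescale_wBoundary hw, plainBd_plainBd, map_zero]

lemma bdries_le_cycles {K : FinSC V} {w : Finset V → R} (hw : IsWeight K w) :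
    ∀ n, bdries K w n ≤ cycles K w n
  | 0 => le_top
  | n + 1 => by
    rintro _ ⟨x, rfl⟩
    exact wBoundary_wBoundary hw n x

/-! ### The inclusion of a subcomplex -/

/-- The inclusion of weighted chain groups induced by a subcomplex `L ⊆ K`. -/
noncomputable def chainIncl {K L : FinSC V} (hLK : L.faces ⊆ K.faces) (w : Finset V → R) (n : ℕ) :
    WChain L w n →ₗ[R] WChain K w n :=
  Finsupp.lmapDomain R R (fun ρ : ChainIdx L w n => (⟨ρ.1, hLK ρ.2.1, ρ.2.2⟩ : ChainIdx K w n))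

lemma rescale_chainIncl {K L : FinSC V} (hLK : L.faces ⊆ K.faces) (w : Finset V → R) (n : ℕ)
    (x : WChain L w n) : rescale K w n (chainIncl hLK w n x) = rescale L w n x := by
  induction x using Finsupp.induction_linear with
  | zero => simp
  | add f g hf hg => simp only [map_add, hf, hg]
  | single ρ r =>
    simp only [chainIncl, Finsupp.lmapDomain_apply, Finsupp.mapDomain_single, rescale_single]

lemma chainIncl_injective {K L : FinSC V} (hLK : L.faces ⊆ K.faces) (w : Finset V → R) (n : ℕ) :
    Function.Injective (chainIncl hLK w n) := by
  intro x y h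
  apply rescale_injective
  rw [← rescale_chainIncl hLK, h, rescale_chainIncl]

lemma IsWeight.mono {K L : FinSC V} (hLK : L.faces ⊆ K.faces) {w : Finset V → R}
    (hw : IsWeight K w) : IsWeight L w :=
  fun α hα β hβ h => hw α (hLK hα) β (hLK hβ) h

lemma wBoundary_chainIncl {K L : FinSC V} (hLK : L.faces ⊆ K.faces) {w : Finset V → R}
    (hw : IsWeight K w) (n : ℕ) (x : WChain L w (n + 1)) :
    wBoundary K w n (chainIncl hLK w (n + 1) x) = chainIncl hLK w n (wBoundary L w n x) := by
  apply rescale_injective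
  rw [rescale_wBoundary hw, rescale_chainIncl, rescale_chainIncl,
    rescale_wBoundary (hw.mono hLK)]

lemma exists_chainIncl_eq {K L : FinSC V} (hLK : L.faces ⊆ K.faces) (w : Finset V → R) (n : ℕ)
    (x : WChain K w n) (hx : ∀ ρ : ChainIdx K w n, ρ.1 ∉ L.faces → x ρ = 0) :
    ∃ y, chainIncl hLK w n y = x := by
  have hinj : Function.Injective
      (fun ρ : ChainIdx L w n => (⟨ρ.1, hLK ρ.2.1, ρ.2.2⟩ : ChainIdx K w n)) := by
    intro α β h
    exact Subtype.ext (Subtype.mk.inj h)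
  refine ⟨Finsupp.comapDomain _ x hinj.injOn, ?_⟩
  refine Finsupp.mapDomain_comapDomain _ hinj x ?_
  intro ρ hρ
  by_cases h : ρ.1 ∈ L.faces
  · exact ⟨⟨ρ.1, h, ρ.2.2⟩, rfl⟩
  · exact absurd (hx ρ h) (Finsupp.mem_support_iff.1 hρ)

lemma chainIncl_mem_cycles {K L : FinSC V} (hLK : L.faces ⊆ K.faces) {w : Finset V → R}
    (hw : IsWeight K w) :
    ∀ (n : ℕ) (y : WChain L w n), chainIncl hLK w n y ∈ cycles K w n ↔ y ∈ cycles L w n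
  | 0, _ => by simp [cycles]
  | n + 1, y => by
    simp only [cycles, LinearMap.mem_ker, wBoundary_chainIncl hLK hw]
    exact map_eq_zero_iff _ (chainIncl_injective hLK w n)

/-- If `L ⊆ K` is such that every chain of `K` which is a cycle, or whose boundary lies in `L`,
is homologous to a chain of `L`, then the inclusion induces isomorphisms on homology. -/
lemma nonempty_equiv_of_deform {K L : FinSC V} (hLK : L.faces ⊆ K.faces) {w : Finset V → R}
    (hw : IsWeight K w)
    (hcyc : ∀ (n : ℕ) (x : WChain K w n), x ∈ cycles K w n →
      ∃ y b, x = chainIncl hLK w n y + wBoundary K w n b)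
    (hrel : ∀ (n : ℕ) (x : WChain K w (n + 1)) (z : WChain L w n),
      wBoundary K w n x = chainIncl hLK w n z →
      ∃ y b, x = chainIncl hLK w (n + 1) y + wBoundary K w (n + 1) b) (i : ℕ) :
    Nonempty (wHomology K w i ≃ₗ[R] wHomology L w i) := by
  have hle : bdries L w i ≤ (bdries K w i).comap (chainIncl hLK w i) := by
    rintro _ ⟨x, rfl⟩
    exact ⟨chainIncl hLK w (i + 1) x, wBoundary_chainIncl hLK hw i x⟩
  let f := Submodule.mapQ (bdries L w i) (bdries K w i) (chainIncl hLK w i) hle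
  have hf : Function.Injective f := by
    rw [injective_iff_map_eq_zero]
    intro q hq
    obtain ⟨z, rfl⟩ := Submodule.mkQ_surjective _ q
    simp only [f, Submodule.mkQ_apply, Submodule.mapQ_apply, Submodule.Quotient.mk_eq_zero] at hq ⊢
    obtain ⟨x, hx⟩ := hq
    obtain ⟨y, b, hyb⟩ := hrel i x z hx
    refine ⟨y, chainIncl_injective hLK w i ?_⟩
    rw [← wBoundary_chainIncl hLK hw, ← hx, hyb, map_add, wBoundary_wBoundary hw, add_zero]
  have himg : (wHomologyS L w i).map f = wHomologyS K w i := by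
    apply le_antisymm
    · rintro _ ⟨_, ⟨z, hz, rfl⟩, rfl⟩
      exact ⟨chainIncl hLK w i z, (chainIncl_mem_cycles hLK hw i z).2 hz, rfl⟩
    · rintro _ ⟨x, hx, rfl⟩
      obtain ⟨y, b, hyb⟩ := hcyc i x hx
      have hb : wBoundary K w i b ∈ bdries K w i := ⟨b, rfl⟩
      have hy : y ∈ cycles L w i := by
        rw [← chainIncl_mem_cycles hLK hw, eq_sub_of_add_eq hyb.symm]
        exact Submodule.sub_mem _ hx (bdries_le_cycles hw i hb)
      refine ⟨_, ⟨y, hy, rfl⟩, ?_⟩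
      simp only [f, Submodule.mkQ_apply, Submodule.mapQ_apply]
      rw [Submodule.Quotient.eq, hyb, sub_add_cancel_left]
      exact Submodule.neg_mem _ hb
  exact ⟨((Submodule.equivMapOfInjective f hf _).trans (LinearEquiv.ofEq _ _ himg)).symm⟩

/-! ### The free face -/

lemma plainBd_single_apply_of_not_ssubset {σ ρ : Finset V} (h : ¬ σ ⊂ ρ) (r : R) :
    plainBd V R (Finsupp.single ρ r) σ = 0 := by
  rw [plainBd_single, Finsupp.smul_apply, Finsupp.finsetSum_apply, Finset.sum_eq_zero, smul_zero]
  intro v hv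
  apply Finsupp.single_eq_of_ne
  rintro rfl
  exact h (Finset.erase_ssubset hv)

/-- A codimension-one face has coefficient `±1` in the ordinary boundary. -/
lemma exists_unit_plainBd {σ τ : Finset V} (h : σ ⊂ τ) (hc : τ.card = σ.card + 1) :
    ∃ ε : R, ε * ε = 1 ∧ ∀ r : R, plainBd V R (Finsupp.single τ r) σ = r * ε := by
  obtain ⟨v, hv⟩ : ∃ v, τ \ σ = {v} := Finset.card_eq_one.1 (by
    rw [Finset.card_sdiff_of_subset h.1]; omega)
  have hvm : v ∈ τ ∧ v ∉ σ := by
    rw [← Finset.mem_sdiff, hv]; simp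
  have he : τ.erase v = σ := by
    rw [← Finset.sdiff_singleton_eq_erase, ← hv, Finset.sdiff_sdiff_eq_self h.1]
  refine ⟨vSign R τ v, ?_, fun r => ?_⟩
  · rw [vSign, ← mul_pow]; simp
  · rw [plainBd_single, Finsupp.smul_apply, Finsupp.finsetSum_apply, Finset.sum_eq_single v]
    · rw [he, Finsupp.single_eq_same, smul_eq_mul]
    · intro u hu huv
      apply Finsupp.single_eq_of_ne
      intro h'
      exact hvm.2 (h' ▸ Finset.mem_erase.2 ⟨Ne.symm huv, hvm.1⟩)
    · exact fun h' => absurd hvm.1 h'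

/-- Since `τ` is the only coface of `σ`, the coefficient of `σ` in `∂x` only sees the
coefficient of `τ` in `x`; with equal weights the two agree up to the sign `ε`. -/
lemma exists_coeff_free {K : FinSC V} {w : Finset V → R} (hw : IsWeight K w) {σ τ : Finset V}
    (hfree : IsFreeFace K σ τ) (m : ℕ) (hσ : σ.card = m + 1) (hτ : τ.card = m + 2)
    (hne : w σ ≠ 0) (heq : w τ = w σ) :
    ∃ ε : R, ε * ε = 1 ∧ ∀ x : WChain K w (m + 1),
      wBoundary K w m x ⟨σ, hfree.1, hσ, hne⟩ =
        x ⟨τ, hfree.2.1, hτ, heq ▸ hne⟩ * ε := by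
  obtain ⟨ε, hε, hbd⟩ := exists_unit_plainBd (R := R) hfree.2.2.1 (by omega)
  refine ⟨ε, hε, fun x => ?_⟩
  induction x using Finsupp.induction_linear with
  | zero => simp
  | add f g hf hg => rw [map_add, Finsupp.add_apply, hf, hg, Finsupp.add_apply, add_mul]
  | single ρ r =>
    apply mul_right_cancel₀ hne
    rw [← rescale_apply K w m _ ⟨σ, hfree.1, hσ, hne⟩, rescale_wBoundary hw, rescale_single]
    by_cases h : ρ.1 = τ
    · obtain ⟨ρ, hρ⟩ := ρ
      obtain rfl : ρ = τ := h
      rw [hbd, Finsupp.single_eq_same, heq]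
      ring
    · rw [plainBd_single_apply_of_not_ssubset (fun h' => h (hfree.2.2.2 _ ρ.2.1 h')),
        Finsupp.single_eq_of_ne (fun h' => h (congrArg Subtype.val h').symm), zero_mul, zero_mul]

/-- Theorem `thm:sameweight`.  Let `(K,w)` be a weighted simplicial
complex over an integral domain `R`, and suppose `K` collapses onto `L = K \ {σ,τ}` by an
elementary collapse of dimension `n ≥ 1`, where `σ^{(n-1)}` is a free face of `τ^{(n)}`.
If `w σ = w τ = a` for some nonzero `a ∈ R`, then the collapse preserves weighted
homology: `H_i(K,w) ≅ H_i(L,w)` for all `i ≥ 0`. -/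
theorem elemCollapse_eq_weight_preserves_wHomology
    (K L : FinSC V) (w : Finset V → R) (hw : IsWeight K w)
    (n : ℕ) (hn : 1 ≤ n) (σ τ : Finset V)
    (hσcard : σ.card = n) (hτcard : τ.card = n + 1)
    (hfree : IsFreeFace K σ τ)
    (hL : L.faces = K.faces \ {σ, τ})
    (a : R) (ha : a ≠ 0) (hwσ : w σ = a) (hwτ : w τ = a) :
    ∀ i : ℕ, Nonempty (wHomology K w i ≃ₗ[R] wHomology L w i) := by
  obtain ⟨m, rfl⟩ : ∃ m, n = m + 1 := ⟨n - 1, by omega⟩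
  have hLK : L.faces ⊆ K.faces := hL ▸ Finset.sdiff_subset
  have hne : w σ ≠ 0 := hwσ ▸ ha
  have heq : w τ = w σ := hwτ.trans hwσ.symm
  obtain ⟨ε, hε, hcoeff⟩ := exists_coeff_free hw hfree m hσcard hτcard hne heq
  set s : ChainIdx K w m := ⟨σ, hfree.1, hσcard, hne⟩ with hs
  set t : ChainIdx K w (m + 1) := ⟨τ, hfree.2.1, hτcard, heq ▸ hne⟩ with ht
  have hnotL : ∀ ρ ∈ K.faces, ρ ∉ L.faces → ρ = σ ∨ ρ = τ := by
    intro ρ hρ h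
    rw [hL] at h
    simp only [Finset.mem_sdiff, Finset.mem_insert, Finset.mem_singleton] at h
    tauto
  have hσL : σ ∉ L.faces := by rw [hL]; simp
  -- Degrees other than `m + 1`: in degree `m` a multiple of `∂τ` cancels the coefficient of `σ`.
  have hother : ∀ (k : ℕ), k ≠ m + 1 → ∀ x : WChain K w k,
      ∃ y b, x = chainIncl hLK w k y + wBoundary K w k b := by
    intro k hk x
    by_cases hkm : k = m
    · subst hkm
      let b : WChain K w (k + 1) := Finsupp.single t (x s * ε)
      obtain ⟨y, hy⟩ := exists_chainIncl_eq hLK w k (x - wBoundary K w k b) (by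
        intro ρ hρ
        rcases hnotL _ ρ.2.1 hρ with h | h
        · obtain rfl : ρ = s := Subtype.ext h
          rw [Finsupp.sub_apply, hcoeff, Finsupp.single_eq_same, mul_assoc, hε, mul_one, sub_self]
        · have := ρ.2.2.1
          rw [h] at this
          omega)
      exact ⟨y, b, by rw [hy, sub_add_cancel]⟩
    · obtain ⟨y, hy⟩ := exists_chainIncl_eq hLK w k x (by
        intro ρ hρ
        have := ρ.2.2.1
        rcases hnotL _ ρ.2.1 hρ with h | h <;> rw [h] at this <;> omega)
      exact ⟨y, 0, by rw [hy, map_zero, add_zero]⟩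
  -- Degree `m + 1`: if `σ` does not occur in `∂x`, then `τ` does not occur in `x`.
  have htop : ∀ x : WChain K w (m + 1), wBoundary K w m x s = 0 →
      ∃ y b, x = chainIncl hLK w (m + 1) y + wBoundary K w (m + 1) b := by
    intro x hx
    obtain ⟨y, hy⟩ := exists_chainIncl_eq hLK w (m + 1) x (by
      intro ρ hρ
      rcases hnotL _ ρ.2.1 hρ with h | h
      · have := ρ.2.2.1
        rw [h] at this
        omega
      · obtain rfl : ρ = t := Subtype.ext h
        rw [hcoeff] at hx
        rw [← mul_one (x _), ← hε, ← mul_assoc, hx, zero_mul])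
    exact ⟨y, 0, by rw [hy, map_zero, add_zero]⟩
  refine nonempty_equiv_of_deform hLK hw ?_ ?_
  · intro k x hx
    by_cases hk : k = m + 1
    · subst hk
      have hx' : wBoundary K w m x = 0 := hx
      exact htop x (by rw [hx', Finsupp.zero_apply])
    · exact hother k hk x
  · intro k x z hxz
    by_cases hk : k = m
    · subst hk
      refine htop x ?_
      rw [hxz]
      refine Finsupp.mapDomain_of_notMem_range _ _ ?_
      rintro ⟨ρ, hρ⟩
      have hρσ : ρ.1 = σ := Subtype.mk.inj hρ
      exact hσL (hρσ ▸ ρ.2.1)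
    · exact hother (k + 1) (by omega) x

end FinSC
end

section
/- Let (K,w) be a weighted simplicial complex over an integral domain R, let σ^{(n)} be a maximal face of K with w(σ) ≠ 0, and let L = K \ {σ}. Then H_{n−1}(K,w) ≅ H_{n−1}(L,w)/{ r·[∂^w σ] : r ∈ R }, where ∂^w denotes the weighted boundary operator of C_*(K,w) and [∂^w σ] denotes the homology class of ∂^w σ in H_{n−1}(L,w). -/
namespace FinSC

variable {V : Type*} [LinearOrder V] {R : Type*} [CommRing R] [IsDomain R]

/-- If an isomorphism `E` carries `Z` onto `Z'` and `B'` is the image of `B` enlarged by the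
multiples of `E b`, then the image of `Z'` modulo `B'` is the image of `Z` modulo `B`, divided by
the class of `b`. -/
theorem exists_surjective_ker_eq_span {R M M' : Type*} [CommRing R] [AddCommGroup M] [Module R M]
    [AddCommGroup M'] [Module R M'] (E : M ≃ₗ[R] M') (Z B : Submodule R M)
    (Z' B' : Submodule R M') (b : M) (hb : b ∈ Z)
    (hZ : Z.map E.toLinearMap = Z')
    (hB : B' = B.map E.toLinearMap ⊔ Submodule.span R {E b}) :
    ∃ f : ↥(Z.map B.mkQ) →ₗ[R] ↥(Z'.map B'.mkQ), Function.Surjective f ∧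
      LinearMap.ker f =
        Submodule.span R {(⟨B.mkQ b, Submodule.mem_map_of_mem hb⟩ : ↥(Z.map B.mkQ))} := by
  have hle : B ≤ B'.comap E.toLinearMap := by
    rw [← Submodule.map_le_iff_le_comap, hB]
    exact le_sup_left
  have hmaps : ∀ x ∈ Z.map B.mkQ, B.mapQ B' E.toLinearMap hle x ∈ Z'.map B'.mkQ := by
    rintro _ ⟨z, hz, rfl⟩
    exact ⟨E z, hZ ▸ Submodule.mem_map_of_mem hz, rfl⟩
  refine ⟨(B.mapQ B' E.toLinearMap hle).restrict hmaps, ?_, ?_⟩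
  · rintro ⟨_, z', hz', rfl⟩
    rw [SetLike.mem_coe, ← hZ] at hz'
    obtain ⟨z, hz, rfl⟩ := hz'
    exact ⟨⟨B.mkQ z, Submodule.mem_map_of_mem hz⟩, rfl⟩
  · apply le_antisymm
    · rintro ⟨_, z, hz, rfl⟩ h
      have h0 : B'.mkQ (E z) = 0 := congrArg Subtype.val (LinearMap.mem_ker.mp h)
      have h1 : E z ∈ B' := by simpa using h0
      rw [hB, Submodule.mem_sup] at h1
      obtain ⟨_, ⟨y, hy, rfl⟩, _, hr, hsum⟩ := h1
      obtain ⟨r, rfl⟩ := Submodule.mem_span_singleton.mp hr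
      have hz' : z = y + r • b := E.injective (by simpa using hsum.symm)
      refine Submodule.mem_span_singleton.mpr ⟨r, Subtype.ext ?_⟩
      have hy0 : B.mkQ y = 0 := by simpa using hy
      change r • B.mkQ b = B.mkQ z
      rw [hz', map_add, hy0, zero_add, map_smul]
    · rw [Submodule.span_singleton_le_iff_mem, LinearMap.mem_ker]
      apply Subtype.ext
      change B'.mkQ (E b) = 0
      rw [Submodule.mkQ_apply, Submodule.Quotient.mk_eq_zero, hB]
      exact Submodule.mem_sup_right (Submodule.mem_span_singleton_self _)

/-- The isomorphism `C_k(L,w) ≃ C_k(K,w)` for `L = K \ {σ}`, in degrees `k ≠ dim σ`. -/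
noncomputable def chainEquiv (K L : FinSC V) (w : Finset V → R) (σ : Finset V)
    (hL : L.faces = K.faces.erase σ) (k : ℕ) (hk : σ.card ≠ k + 1) :
    WChain L w k ≃ₗ[R] WChain K w k :=
  Finsupp.domLCongr (Equiv.subtypeEquivRight fun τ => by
    rw [hL, Finset.mem_erase]
    exact ⟨fun h => ⟨h.1.2, h.2⟩, fun h => ⟨⟨fun e => hk (e ▸ h.2.1), h.1⟩, h.2⟩⟩)

theorem chainEquiv_bdElem (K L : FinSC V) (w : Finset V → R) (σ : Finset V)
    (hL : L.faces = K.faces.erase σ) (k : ℕ) (hk : σ.card ≠ k + 1) (τ : Finset V) :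
    chainEquiv K L w σ hL k hk (bdElem L w k τ) = bdElem K w k τ := by
  unfold bdElem
  rw [map_sum]
  refine Finset.sum_congr rfl fun i _ => ?_
  by_cases h : dFace τ i ∈ K.faces ∧ (dFace τ i).card = k + 1 ∧ w (dFace τ i) ≠ 0
  · have h' : dFace τ i ∈ L.faces ∧ (dFace τ i).card = k + 1 ∧ w (dFace τ i) ≠ 0 := by
      rw [hL, Finset.mem_erase]
      exact ⟨⟨fun e => hk (e ▸ h.2.1), h.1⟩, h.2⟩
    rw [dif_pos h, dif_pos h', chainEquiv, Finsupp.domLCongr_single]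
    rfl
  · have h' : ¬ (dFace τ i ∈ L.faces ∧ (dFace τ i).card = k + 1 ∧ w (dFace τ i) ≠ 0) := by
      rw [hL, Finset.mem_erase]
      exact fun h' => h ⟨h'.1.2, h'.2⟩
    rw [dif_neg h, dif_neg h', map_zero]

theorem wBoundary_chainEquiv (K L : FinSC V) (w : Finset V → R) (σ : Finset V)
    (hL : L.faces = K.faces.erase σ) (k : ℕ) (hk : σ.card ≠ k + 1) (hk' : σ.card ≠ k + 1 + 1)
    (x : WChain L w (k + 1)) :
    wBoundary K w k (chainEquiv K L w σ hL (k + 1) hk' x) =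
      chainEquiv K L w σ hL k hk (wBoundary L w k x) := by
  induction x using Finsupp.induction_linear with
  | zero => simp only [map_zero]
  | add x y hx hy => simp only [map_add, hx, hy]
  | single τ r =>
    rw [chainEquiv, Finsupp.domLCongr_single, wBoundary, wBoundary,
      Finsupp.linearCombination_single, Finsupp.linearCombination_single, map_smul,
      chainEquiv_bdElem]
    rfl

theorem map_cycles_chainEquiv (K L : FinSC V) (w : Finset V → R) (σ : Finset V)
    (hL : L.faces = K.faces.erase σ) (m : ℕ) (hσ : σ.card = m + 2) :
    (cycles L w m).map (chainEquiv K L w σ hL m (by omega)).toLinearMap = cycles K w m := by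
  cases m with
  | zero => simp [cycles]
  | succ k =>
    have hcomm := wBoundary_chainEquiv K L w σ hL k (by omega) (by omega)
    ext y
    obtain ⟨x, rfl⟩ := (chainEquiv K L w σ hL (k + 1) (by omega)).surjective y
    simp only [cycles, Submodule.mem_map, LinearMap.mem_ker, LinearEquiv.coe_coe,
      EmbeddingLike.apply_eq_iff_eq, exists_eq_right]
    rw [hcomm, LinearEquiv.map_eq_zero_iff]

theorem bdries_eq_sup (K L : FinSC V) (w : Finset V → R) (σ : Finset V) (hσK : σ ∈ K.faces)
    (hwσ : w σ ≠ 0) (hL : L.faces = K.faces.erase σ) (m : ℕ) (hσ : σ.card = m + 2) :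
    bdries K w m = (bdries L w m).map (chainEquiv K L w σ hL m (by omega)).toLinearMap ⊔
      Submodule.span R {chainEquiv K L w σ hL m (by omega) (bdElem L w m σ)} := by
  rw [chainEquiv_bdElem]
  simp only [bdries, wBoundary, Finsupp.range_linearCombination]
  rw [Submodule.map_span]
  apply le_antisymm
  · rw [Submodule.span_le]
    rintro _ ⟨τ, rfl⟩
    by_cases hτ : τ.1 = σ
    · refine Submodule.mem_sup_right ?_
      simp only [hτ]
      exact Submodule.mem_span_singleton_self _
    · refine Submodule.mem_sup_left (Submodule.subset_span ?_)
      refine ⟨_, ⟨⟨τ.1, ?_, τ.2.2⟩, rfl⟩, chainEquiv_bdElem K L w σ hL m (by omega) τ.1⟩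
      rw [hL, Finset.mem_erase]
      exact ⟨hτ, τ.2.1⟩
  · rw [sup_le_iff, Submodule.span_le, Submodule.span_le]
    constructor
    · rintro _ ⟨_, ⟨τ, rfl⟩, rfl⟩
      refine Submodule.subset_span ⟨⟨τ.1, ?_, τ.2.2⟩, ?_⟩
      · have hle : L.faces ⊆ K.faces := hL ▸ Finset.erase_subset σ K.faces
        exact hle τ.2.1
      · exact (chainEquiv_bdElem K L w σ hL m (by omega) τ.1).symm
    · rintro _ rfl
      exact Submodule.subset_span ⟨⟨σ, hσK, hσ, hwσ⟩, rfl⟩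

/-- Theorem `thm:removalhom` (2).  Let `(K,w)` be a weighted simplicial
complex over an integral domain `R`, let `σ^{(n)}` (`n ≥ 1`) be a maximal face of `K` with
`w σ ≠ 0`, and let `L = K \ {σ}`.  Then
`H_{n-1}(K,w) ≅ H_{n-1}(L,w) / { r • [∂^w σ] : r ∈ R }`, where `[∂^w σ]` denotes the
homology class of the weighted boundary of `σ` in `H_{n-1}(L,w)`.  (The isomorphism with
the quotient by the cyclic submodule `span R {[∂^w σ]}` is expressed, via the first
isomorphism theorem, by a surjective linear map `H_{n-1}(L,w) → H_{n-1}(K,w)` whose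
kernel is exactly `span R {[∂^w σ]}`.) -/
theorem elemRemoval_wHomology_degree_pred
    (K L : FinSC V) (w : Finset V → R) (hw : IsWeight K w)
    (n : ℕ) (hn : 1 ≤ n) (σ : Finset V) (hσcard : σ.card = n + 1)
    (hmax : IsMaximalFace K σ) (hwσ : w σ ≠ 0)
    (hL : L.faces = K.faces.erase σ)
    (hcyc : bdElem L w (n - 1) σ ∈ cycles L w (n - 1)) :
    ∃ f : wHomology L w (n - 1) →ₗ[R] wHomology K w (n - 1),
      Function.Surjective f ∧
      LinearMap.ker f =
        Submodule.span R {classOf L w (n - 1) (bdElem L w (n - 1) σ) hcyc} := by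
  obtain ⟨m, rfl⟩ : ∃ m, n = m + 1 := ⟨n - 1, by omega⟩
  exact exists_surjective_ker_eq_span (chainEquiv K L w σ hL m (by omega)) _ _ _ _ _ hcyc
    (map_cycles_chainEquiv K L w σ hL m hσcard)
    (bdries_eq_sup K L w σ hmax.1 hwσ hL m hσcard)

end FinSC
end

section
/- Let (K,w) be a weighted simplicial complex over an integral domain R, let σ^{(n)} be a maximal face of K with w(σ) ≠ 0, let L = K \ {σ}, and let i_* : H_n(L,w) → H_n(K,w) be the map induced by the inclusion of chain complexes C_*(L,w) → C_*(K,w). Then H_n(K,w)/Im(i_*) ≅ { r ∈ R : r·[∂^w σ] = 0 in H_{n−1}(L,w) } as R-modules. -/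
namespace FinSC

variable {V : Type*} [LinearOrder V] {R : Type*} [CommRing R] [IsDomain R]

/-- The inclusion `C_k(L,w) → C_k(K,w)` of chain groups for a subcomplex `L ⊆ K`. -/
noncomputable def inclChain (K L : FinSC V) (w : Finset V → R) (hLK : L.faces ⊆ K.faces)
    (k : ℕ) : WChain L w k →ₗ[R] WChain K w k :=
  Finsupp.lmapDomain R R (fun τ : ChainIdx L w k => (⟨τ.1, hLK τ.2.1, τ.2.2⟩ : ChainIdx K w k))

lemma inclChain_single (K L : FinSC V) (w : Finset V → R) (hLK : L.faces ⊆ K.faces)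
    (k : ℕ) (τ : ChainIdx L w k) (r : R) :
    inclChain K L w hLK k (Finsupp.single τ r) =
      Finsupp.single (⟨τ.1, hLK τ.2.1, τ.2.2⟩ : ChainIdx K w k) r := by
  simp [inclChain, Finsupp.lmapDomain_apply, Finsupp.mapDomain_single]

lemma inclChain_injective (K L : FinSC V) (w : Finset V → R) (hLK : L.faces ⊆ K.faces)
    (k : ℕ) : Function.Injective (inclChain K L w hLK k) := by
  refine Finsupp.mapDomain_injective ?_
  rintro ⟨a, ha⟩ ⟨b, hb⟩ h
  simpa using h

lemma inclChain_apply_eq_zero (K L : FinSC V) (w : Finset V → R) (hLK : L.faces ⊆ K.faces)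
    (k : ℕ) (y : WChain L w k) (s : ChainIdx K w k) (hs : s.1 ∉ L.faces) :
    inclChain K L w hLK k y s = 0 := by
  refine Finsupp.mapDomain_of_notMem_range _ _ ?_
  rintro ⟨τ, rfl⟩
  exact hs τ.2.1

/-- A chain of `K` supported on a subcomplex `L` comes from a chain of `L`. -/
lemma exists_inclChain_eq (K L : FinSC V) (w : Finset V → R) (hLK : L.faces ⊆ K.faces)
    (k : ℕ) (z : WChain K w k) (hz : z ∈ chainsIn K L w k) :
    ∃ y : WChain L w k, inclChain K L w hLK k y = z := by
  have hinj : Function.Injective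
      (fun τ : ChainIdx L w k => (⟨τ.1, hLK τ.2.1, τ.2.2⟩ : ChainIdx K w k)) := by
    rintro ⟨a, ha⟩ ⟨b, hb⟩ h
    simpa using h
  refine ⟨Finsupp.comapDomain _ z hinj.injOn, Finsupp.mapDomain_comapDomain _ hinj z ?_⟩
  intro s hs
  exact ⟨⟨s.1, hz s (by simpa using hs), s.2.2⟩, rfl⟩

lemma dFace_subset (τ : Finset V) (i : ℕ) : dFace τ i ⊆ τ := by
  unfold dFace
  split
  · exact Finset.erase_subset _ _
  · exact subset_rfl

/-- If `K` and `L` have the same `m`-simplices, then boundaries of `(m+1)`-simplices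
computed in `K` and in `L` agree. -/
lemma inclChain_bdElem (K L : FinSC V) (w : Finset V → R) (hLK : L.faces ⊆ K.faces)
    (m : ℕ) (hm : ∀ τ ∈ K.faces, τ.card = m + 1 → τ ∈ L.faces) (τ : Finset V) :
    inclChain K L w hLK m (bdElem L w m τ) = bdElem K w m τ := by
  unfold bdElem
  rw [map_sum]
  refine Finset.sum_congr rfl fun i _ => ?_
  by_cases h : dFace τ i ∈ L.faces ∧ (dFace τ i).card = m + 1 ∧ w (dFace τ i) ≠ 0
  · rw [dif_pos h, dif_pos ⟨hLK h.1, h.2⟩, inclChain_single]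
  · rw [dif_neg h, dif_neg fun h' => h ⟨hm _ h'.1 h'.2.1, h'.2⟩, map_zero]

lemma wBoundary_inclChain (K L : FinSC V) (w : Finset V → R) (hLK : L.faces ⊆ K.faces)
    (m : ℕ) (hm : ∀ τ ∈ K.faces, τ.card = m + 1 → τ ∈ L.faces) (y : WChain L w (m + 1)) :
    wBoundary K w m (inclChain K L w hLK (m + 1) y) =
      inclChain K L w hLK m (wBoundary L w m y) := by
  induction y using Finsupp.induction_linear with
  | zero => simp
  | add a b ha hb => simp only [map_add, ha, hb]
  | single τ r =>
    rw [inclChain_single]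
    simp only [wBoundary, Finsupp.linearCombination_single, map_smul]
    rw [inclChain_bdElem K L w hLK m hm]

/-- A maximal face has coefficient zero in every boundary. -/
lemma bdries_apply_maximal (K : FinSC V) (w : Finset V → R) (n : ℕ) (s : ChainIdx K w n)
    (hmax : IsMaximalFace K s.1) : bdries K w n ≤ LinearMap.ker (Finsupp.lapply (R := R) s) := by
  rintro _ ⟨y, rfl⟩
  rw [LinearMap.mem_ker]
  induction y using Finsupp.induction_linear with
  | zero => simp
  | add a b ha hb => rw [map_add, map_add, ha, hb, add_zero]
  | single τ r =>
    simp only [wBoundary, Finsupp.linearCombination_single, map_smul, bdElem, map_sum]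
    rw [Finset.sum_eq_zero, smul_zero]
    intro i _
    split_ifs with h
    · rw [Finsupp.lapply_apply, Finsupp.single_eq_of_ne]
      rintro rfl
      refine hmax.2 τ.1 τ.2.1 ((dFace_subset _ _).ssubset_of_ne fun h' => ?_)
      have h1 := congrArg Finset.card h'
      have h2 := h.2.1
      have h3 := τ.2.2.1
      omega
    · simp

/-- Theorem `thm:removalhom` (3).  Let `(K,w)` be a weighted simplicial
complex over an integral domain `R`, let `σ^{(n)}` (`n ≥ 1`) be a maximal face of `K` with
`w σ ≠ 0`, let `L = K \ {σ}`, and let `i_* : H_n(L,w) → H_n(K,w)` be induced by the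
inclusion of chain complexes (its image `imInduced K L w n` consists of the classes of
cycles supported on simplices of `L`).  Then
`H_n(K,w) / Im i_* ≅ { r ∈ R : r • [∂^w σ] = 0 }` as `R`-modules.  (The isomorphism is
expressed, via the first isomorphism theorem, by a linear map `H_n(K,w) → R` with kernel
exactly `Im i_*` and range exactly the ideal `{ r : r • [∂^w σ] = 0 }`.) -/
theorem elemRemoval_wHomology_degree_top
    (K L : FinSC V) (w : Finset V → R) (hw : IsWeight K w)
    (n : ℕ) (hn : 1 ≤ n) (σ : Finset V) (hσcard : σ.card = n + 1)
    (hmax : IsMaximalFace K σ) (hwσ : w σ ≠ 0)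
    (hL : L.faces = K.faces.erase σ)
    (hcyc : bdElem L w (n - 1) σ ∈ cycles L w (n - 1)) :
    ∃ f : wHomology K w n →ₗ[R] R,
      LinearMap.ker f = imInduced K L w n ∧
      LinearMap.range f =
        LinearMap.ker (LinearMap.toSpanSingleton R (wHomology L w (n - 1))
          (classOf L w (n - 1) (bdElem L w (n - 1) σ) hcyc)) := by
  obtain ⟨m, rfl⟩ : ∃ m, n = m + 1 := ⟨n - 1, by omega⟩
  have hLK : L.faces ⊆ K.faces := hL ▸ Finset.erase_subset _ _
  have hm : ∀ τ ∈ K.faces, τ.card = m + 1 → τ ∈ L.faces := by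
    intro τ hτ hc
    rw [hL, Finset.mem_erase]
    refine ⟨?_, hτ⟩
    rintro rfl
    omega
  have hσL : σ ∉ L.faces := by simp [hL]
  let s : ChainIdx K w (m + 1) := ⟨σ, hmax.1, hσcard, hwσ⟩
  have hchains : ∀ z : WChain K w (m + 1), z ∈ chainsIn K L w (m + 1) ↔ z s = 0 := by
    intro z
    refine ⟨fun hz => by_contra fun h => hσL (hz s h), fun hz τ hτ => ?_⟩
    rw [hL, Finset.mem_erase]
    refine ⟨fun h => hτ ?_, τ.2.1⟩
    rwa [show τ = s from Subtype.ext h]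
  have hbs : wBoundary K w m (Finsupp.single s 1) = inclChain K L w hLK m (bdElem L w m σ) := by
    rw [inclChain_bdElem K L w hLK m hm]
    simp [wBoundary, s]
  let g := (bdries K w (m + 1)).liftQ (Finsupp.lapply (R := R) s)
    (bdries_apply_maximal K w (m + 1) s hmax)
  have hg : ∀ z, g ((bdries K w (m + 1)).mkQ z) = z s := fun z => rfl
  refine ⟨g ∘ₗ (wHomologyS K w (m + 1)).subtype, ?_, ?_⟩
  · ext ⟨x, hx⟩
    obtain ⟨z, hz, rfl⟩ := hx
    rw [LinearMap.mem_ker, LinearMap.comp_apply, Submodule.subtype_apply, hg]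
    constructor
    · exact fun h => ⟨z, ⟨hz, (hchains z).2 h⟩, rfl⟩
    · rintro ⟨z', ⟨-, hz'⟩, h⟩
      rw [← hg z]
      exact (congrArg g h).symm.trans ((hg z').trans ((hchains z').1 hz'))
  · ext r
    -- Membership on the right says that `r • ∂σ` is a boundary of `L`.
    have hr : r ∈ LinearMap.ker (LinearMap.toSpanSingleton R (wHomology L w m)
          (classOf L w m (bdElem L w m σ) hcyc)) ↔ r • bdElem L w m σ ∈ bdries L w m := by
      rw [LinearMap.mem_ker, LinearMap.toSpanSingleton_apply, ← Subtype.coe_inj]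
      change r • (bdries L w m).mkQ (bdElem L w m σ) = 0 ↔ _
      rw [← map_smul, Submodule.mkQ_apply, Submodule.Quotient.mk_eq_zero]
    refine Iff.trans ?_ hr.symm
    constructor
    · rintro ⟨⟨x, hx⟩, rfl⟩
      obtain ⟨z, hz, rfl⟩ := hx
      rw [LinearMap.comp_apply, Submodule.subtype_apply, hg]
      obtain ⟨y, hy⟩ := exists_inclChain_eq K L w hLK (m + 1) (z - z s • Finsupp.single s 1)
        ((hchains _).2 (by simp))
      refine ⟨-y, inclChain_injective K L w hLK m ?_⟩
      have hz' : wBoundary K w m z = 0 := hz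
      rw [← wBoundary_inclChain K L w hLK m hm, map_neg, hy, map_smul, ← hbs, map_neg, map_sub,
        hz', map_smul, zero_sub, neg_neg]
    · rintro ⟨y, hy⟩
      let z := r • Finsupp.single s 1 - inclChain K L w hLK (m + 1) y
      have hz : z ∈ cycles K w (m + 1) := by
        change wBoundary K w m z = 0
        rw [map_sub, wBoundary_inclChain K L w hLK m hm, hy, map_smul, map_smul, hbs, sub_self]
      refine ⟨classOf K w (m + 1) z hz, ?_⟩
      change z s = r
      simp [z, inclChain_apply_eq_zero K L w hLK (m + 1) y s hσL]

end FinSC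
end

section
/- Let K be a finite simplicial complex with a discrete Morse function f. Let α^{(n)} ∈ K and suppose β ∈ K satisfies β > α. Then there exists an (n+1)-simplex β̃^{(n+1)} with α < β̃ ≤ β and f(β̃) ≤ f(β). -/
namespace FinSC

variable {V : Type*} [LinearOrder V] {R : Type*} [CommRing R] [IsDomain R]

/-- Lemma `lemma:existsn+1`.  Let `K` be a finite simplicial complex
with a discrete Morse function `f`.  Let `α^{(n)} ∈ K` and suppose `β > α`.  Then there
exists an `(n+1)`-simplex `β̃` with `α < β̃ ≤ β` and `f β̃ ≤ f β`. -/
theorem exists_coface_of_dim_succ_le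
    (K : FinSC V) (f : Finset V → ℝ) (hf : IsDiscreteMorse K f)
    (α β : Finset V) (hα : α ∈ K.faces) (hβ : β ∈ K.faces) (hαβ : α ⊂ β) :
    ∃ βt : Finset V, βt ∈ K.faces ∧ βt.card = α.card + 1 ∧
      α ⊂ βt ∧ βt ⊆ β ∧ f βt ≤ f β := by
  -- Strong induction on `β` with respect to proper inclusion.
  induction β using Finset.strongInduction with
  | H β ih =>
    by_cases hc : β.card = α.card + 1
    · exact ⟨β, hβ, hc, hαβ, subset_rfl, le_rfl⟩
    have hlt := Finset.card_lt_card hαβ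
    have hsd : (β \ α).card = β.card - α.card := Finset.card_sdiff_of_subset hαβ.1
    obtain ⟨u, hu, v, hv, huv⟩ := Finset.one_lt_card.1 (show 1 < (β \ α).card by omega)
    -- Each facet of `β` opposite a vertex outside `α` is a face of `K` strictly containing `α`.
    have key : ∀ x ∈ β \ α, β.erase x ∈ K.faces ∧ β.erase x ⊂ β ∧
        (β.erase x).card + 1 = β.card ∧ α ⊂ β.erase x := by
      intro x hx
      obtain ⟨hxβ, hxα⟩ := Finset.mem_sdiff.1 hx
      have hcard := Finset.card_erase_add_one hxβ
      have hsub : α ⊆ β.erase x := Finset.subset_erase.2 ⟨hαβ.1, hxα⟩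
      refine ⟨K.down_closed β hβ _ (Finset.erase_subset _ _) ?_,
        Finset.erase_ssubset hxβ, hcard, ?_⟩
      · exact Finset.card_pos.1 (by omega)
      · refine Finset.ssubset_iff_subset_ne.2 ⟨hsub, fun h => ?_⟩
        rw [← h] at hcard
        omega
    have step : ∀ x ∈ β \ α, f (β.erase x) < f β → ∃ βt : Finset V, βt ∈ K.faces ∧
        βt.card = α.card + 1 ∧ α ⊂ βt ∧ βt ⊆ β ∧ f βt ≤ f β := by
      intro x hx hfx
      obtain ⟨hK, hss, -, hαx⟩ := key x hx
      obtain ⟨βt, h1, h2, h3, h4, h5⟩ := ih _ hss hK hαx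
      exact ⟨βt, h1, h2, h3, h4.trans hss.1, h5.trans hfx.le⟩
    by_cases hfu : f (β.erase u) < f β
    · exact step u hu hfu
    by_cases hfv : f (β.erase v) < f β
    · exact step v hv hfv
    -- Otherwise `β` would have two distinct facets with `f`-value at least `f β`.
    obtain ⟨hKu, hssu, hcu, -⟩ := key u hu
    obtain ⟨hKv, hssv, hcv, -⟩ := key v hv
    have heq : β.erase u = β.erase v :=
      (hf β hβ).2 ⟨hKu, hssu, hcu, not_lt.1 hfu⟩ ⟨hKv, hssv, hcv, not_lt.1 hfv⟩
    exact absurd (Finset.erase_injOn β (Finset.mem_sdiff.1 hu).1 (Finset.mem_sdiff.1 hv).1 heq) huv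

end FinSC
end
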